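/- arXiv:1709.08658 — 2 statements merged into one kernel-verified Lean document; each statement's English description precedes it below -/
import Mathlib

section
/- Let ν ≥ 2 be an integer, t a coefficient vector of length n, and let g_1, …, g_k be binary vectors of length n spanning an 𝔽₂-subspace 𝒮 ⊆ 𝔽₂^n. Then every vector of 𝒮 has (ν,t)-norm zero if and only if the set {g_1, …, g_k} is (ν,t)-null, i.e., the set is (ν,t)-orthogonal and each g_j has (ν,t)-norm zero. -/
open Finset

/-- The mod-2 sum (over `𝔽₂`, represented with integer entries in `{0,1}`)
of the rows of `A` indexed by the finite set `K`. -/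
def modTwoSum {ι κ : Type*} (A : ι → κ → ℤ) (K : Finset ι) : κ → ℤ :=
  fun c => (∑ r ∈ K, A r c) % 2

/-- Two binary vectors `v, w` are `(ν,t)`-orthogonal: `Σᵢ vᵢ wᵢ tᵢ ≡ 0 (mod 2^{ν−1})`. -/
def NuOrthoVec (ν : ℕ) {κ : Type*} [Fintype κ] (t v w : κ → ℤ) : Prop :=
  (2 ^ (ν - 1) : ℤ) ∣ ∑ i, v i * w i * t i

/-- The family of rows of `A` is a `(ν,t)`-orthogonal set: any two disjoint subsets
of the rows span `(ν,t)`-orthogonal `𝔽₂`-subspaces; equivalently, the mod-2 sums of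
any two disjoint subsets of rows are `(ν,t)`-orthogonal vectors. -/
def NuOrthoRows (ν : ℕ) {ι κ : Type*} [Fintype κ] (t : κ → ℤ) (A : ι → κ → ℤ) : Prop :=
  ∀ K K' : Finset ι, Disjoint K K' → NuOrthoVec ν t (modTwoSum A K) (modTwoSum A K')

/-- The rows of the integer `{0,1}`-matrix `A`, reduced modulo 2, are linearly
independent over `𝔽₂`. -/
def RowsLinIndepF2 {ι κ : Type*} (A : ι → κ → ℤ) : Prop :=
  LinearIndependent (ZMod 2) (fun r : ι => fun c : κ => ((A r c : ℤ) : ZMod 2))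

/-!
Addition in `𝔽₂` is `a + b - 2ab` on the integers `0` and `1`, so the weights `Σᵢ vᵢ tᵢ` satisfy
`weight (v ⊕ w) = weight v + weight w - 2 Σᵢ vᵢ wᵢ tᵢ`. Hence, if `v` and `w` have norm zero modulo
`2 ^ ν`, then `v ⊕ w` has norm zero exactly when `v` and `w` are orthogonal modulo `2 ^ (ν - 1)`.
Applied to the sums over two disjoint sets of generators this gives orthogonality of the
generators; applied to one generator at a time it shows by induction that their whole span has
norm zero.
-/

theorem int_add_emod_two (a b : ℤ) : (a + b) % 2 = a % 2 + b % 2 - 2 * (a % 2 * (b % 2)) := by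
  rcases Int.emod_two_eq_zero_or_one a with ha | ha <;>
    rcases Int.emod_two_eq_zero_or_one b with hb | hb <;> rw [ha, hb] <;> omega

section ModTwoSum

variable {ι κ : Type*} (A : ι → κ → ℤ)

theorem modTwoSum_empty : modTwoSum A ∅ = 0 := by
  funext i
  simp [modTwoSum]

theorem modTwoSum_singleton_of_binary {j : ι} (hA : ∀ i, A j i = 0 ∨ A j i = 1) :
    modTwoSum A {j} = A j := by
  funext i
  rcases hA i with h | h <;> simp [modTwoSum, h]

theorem modTwoSum_disjUnion {K K' : Finset ι} (h : Disjoint K K') :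
    modTwoSum A (K.disjUnion K' h) =
      modTwoSum A K + modTwoSum A K' - 2 * (modTwoSum A K * modTwoSum A K') := by
  funext i
  simp only [modTwoSum, sum_disjUnion, Pi.sub_apply, Pi.add_apply, Pi.mul_apply, Pi.ofNat_apply]
  exact int_add_emod_two _ _

end ModTwoSum

/-- The integer vector `v` has `(ν,t)`-norm zero. The norm, a residue modulo `2 ^ ν`, enters the
development only through its vanishing, which is expressed as a divisibility in `ℤ`. -/
def NuNormZero (ν : ℕ) {κ : Type*} [Fintype κ] (t v : κ → ℤ) : Prop :=
  (2 ^ ν : ℤ) ∣ ∑ i, v i * t i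

section NuNorm

variable {ν : ℕ} {ι κ : Type*} [Fintype κ] {t : κ → ℤ}

theorem nuNormZero_zero : NuNormZero ν t 0 := by
  simp [NuNormZero]

theorem nuOrthoVec_iff_two_pow_dvd (hν : ν ≠ 0) {v w : κ → ℤ} :
    NuOrthoVec ν t v w ↔ (2 ^ ν : ℤ) ∣ 2 * ∑ i, v i * w i * t i := by
  rw [NuOrthoVec, ← mul_pow_sub_one hν, mul_dvd_mul_iff_left two_ne_zero]

theorem sum_add_sub_two_mul_mul (t v w : κ → ℤ) :
    ∑ i, (v + w - 2 * (v * w)) i * t i =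
      ∑ i, v i * t i + ∑ i, w i * t i - 2 * ∑ i, v i * w i * t i := by
  rw [mul_sum, ← sum_add_distrib, ← sum_sub_distrib]
  refine sum_congr rfl fun i _ => ?_
  simp only [Pi.sub_apply, Pi.add_apply, Pi.mul_apply, Pi.ofNat_apply]
  ring

theorem NuNormZero.add_sub_two_mul_iff (hν : ν ≠ 0) {v w : κ → ℤ}
    (hv : NuNormZero ν t v) (hw : NuNormZero ν t w) :
    NuNormZero ν t (v + w - 2 * (v * w)) ↔ NuOrthoVec ν t v w := by
  rw [nuOrthoVec_iff_two_pow_dvd hν, NuNormZero, sum_add_sub_two_mul_mul,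
    dvd_sub_right (dvd_add hv hw)]

theorem NuNormZero.modTwoSum_disjUnion_iff (hν : ν ≠ 0) {A : ι → κ → ℤ} {K K' : Finset ι}
    (hK : NuNormZero ν t (modTwoSum A K)) (hK' : NuNormZero ν t (modTwoSum A K'))
    (h : Disjoint K K') :
    NuNormZero ν t (modTwoSum A (K.disjUnion K' h)) ↔
      NuOrthoVec ν t (modTwoSum A K) (modTwoSum A K') := by
  rw [modTwoSum_disjUnion, hK.add_sub_two_mul_iff hν hK']

theorem nuOrthoRows_of_forall_nuNormZero (hν : ν ≠ 0) {A : ι → κ → ℤ}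
    (hA : ∀ J : Finset ι, NuNormZero ν t (modTwoSum A J)) : NuOrthoRows ν t A :=
  fun K K' h => ((hA K).modTwoSum_disjUnion_iff hν (hA K') h).1 (hA _)

theorem NuOrthoRows.nuNormZero_modTwoSum (hν : ν ≠ 0) {A : ι → κ → ℤ} (hA : NuOrthoRows ν t A)
    (hnorm : ∀ j, NuNormZero ν t (modTwoSum A {j})) (J : Finset ι) :
    NuNormZero ν t (modTwoSum A J) := by
  induction J using Finset.cons_induction with
  | empty => exact modTwoSum_empty A ▸ nuNormZero_zero
  | cons j s hj ih =>
    have hdisj : Disjoint {j} s := disjoint_singleton_left.2 hj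
    rw [← singleton_disjUnion j s hdisj, (hnorm j).modTwoSum_disjUnion_iff hν ih]
    exact hA {j} s hdisj

end NuNorm

theorem stmt_5_general {ν : ℕ} (hν : ν ≠ 0) {ι κ : Type*} [Fintype κ] (t : κ → ℤ)
    (g : ι → κ → ℤ) (hg01 : ∀ j i, g j i = 0 ∨ g j i = 1) :
    (∀ J : Finset ι, NuNormZero ν t (modTwoSum g J)) ↔
      NuOrthoRows ν t g ∧ ∀ j, NuNormZero ν t (g j) := by
  have hsingle (j : ι) : modTwoSum g {j} = g j := modTwoSum_singleton_of_binary g (hg01 j)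
  constructor
  · intro h
    exact ⟨nuOrthoRows_of_forall_nuNormZero hν h, fun j => hsingle j ▸ h {j}⟩
  · rintro ⟨hortho, hnorm⟩
    exact hortho.nuNormZero_modTwoSum hν fun j => (hsingle j).symm ▸ hnorm j

/-- For binary vectors `g_1, …, g_k` spanning an `𝔽₂`-subspace
`𝒮 ⊆ 𝔽₂^n` (whose elements are exactly the mod-2 sums of subsets of the `g_j`),
every vector of `𝒮` has `(ν,t)`-norm zero if and only if the set
`{g_1, …, g_k}` is `(ν,t)`-null, i.e., it is `(ν,t)`-orthogonal and every `g_j`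
has `(ν,t)`-norm zero. -/
theorem stmt_5 (ν n k : ℕ) (hν : 2 ≤ ν)
    (t : Fin n → ℤ) (ht : ∀ i, Odd (t i))
    (g : Fin k → Fin n → ℤ) (hg01 : ∀ j i, g j i = 0 ∨ g j i = 1) :
    (∀ J : Finset (Fin k), (2 ^ ν : ℤ) ∣ ∑ i, modTwoSum g J i * t i)
      ↔ (NuOrthoRows ν t g ∧ ∀ j, (2 ^ ν : ℤ) ∣ ∑ i, g j i * t i) :=
  stmt_5_general (by omega) t g hg01
end

section
/- Fix integers ν ≥ 2, n_out ≥ 1, n_c ≥ 1. For each α = 1,…,n_c let L^{(α)} be an n_out × n_α binary matrix, S^{(α)} an r_α × n_α binary matrix, and t^{(α)} ∈ ℤ^{n_α} a coefficient vector, such that: the rows of G^{(α)} = [L^{(α)}; S^{(α)}] form a (ν,t^{(α)})-orthogonal set; the rows of S^{(α)} are 𝔽₂-linearly independent and (ν,t^{(α)})-null; the set of nonzero rows of L^{(α)} is (ν,t^{(α)})-orthonormal; and Σ_k Σᵢ L^{(α)}_{ki} t^{(α)}ᵢ ≡ Σᵢ t^{(α)}ᵢ (mod 2^ν). Let M be the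 n_c × n_out binary matrix with M_{αk} = 1 iff row k of L^{(α)} is nonzero. Index columns by one block of size n_out followed by, for each α, a block of size 2n_α split into two halves. Define the binary matrix 𝔠 with rows: (𝔠_ℓ) for k = 1,…,n_out, the row with a 1 in position k of the first block and, in each block α, both halves equal to the k-th row of L^{(α)}; (𝔠_out) for α = 1,…,n_c, the row whose first block is M_{α*}, whose block β for β < α has both halves equal to Σ_k M_{αk} L^{(β)}_{k*} mod 2, whose block α has first half all-ones and second half zero, and which is zero in blocks β > α; (𝔠_in) for each α and each row s of S^{(α)}, the row which is zero outside block α and whose block α has both halves equal to S^{(α)}_{s*}. Then there exists a coefficient vector t ∈ ℤ^{n_out + Σ_α 2n_α} (all entries odd) such that the rows of 𝔠 form a (ν+1,t)-orthogonal set, the rows of 𝔠_ℓ are (ν+1,t)-orthonormal, the rows of 𝔠_out and of 𝔠_in are (ν+1,t)-null, and Σ_k Σᵢ (𝔠_ℓ)_{ki} tᵢ ≡ Σᵢ tᵢ (mod 2^{ν+1}). -/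
open Finset

/-- Column index type for the lifted matrix: one block of size `n_out`, followed by,
for each `α`, a block of size `2 n_α` split into two halves (indexed by `Bool`,
`false` = first half, `true` = second half). -/
abbrev LiftCol (nout nc : ℕ) (na : Fin nc → ℕ) :=
  Fin nout ⊕ (Σ α : Fin nc, Bool × Fin (na α))

/-- The `n_c × n_out` binary matrix `M` with `M_{αk} = 1` iff row `k` of `L^{(α)}`
is nonzero. -/
def Mmat {nout nc : ℕ} {na : Fin nc → ℕ}
    (L : (α : Fin nc) → Fin nout → Fin (na α) → ℤ) : Fin nc → Fin nout → ℤ :=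
  fun α k => if L α k = 0 then 0 else 1

/-- Row `k` of the block `𝔠_ℓ`: a `1` in position `k` of the first block and, in
each block `α`, both halves equal to the `k`-th row of `L^{(α)}`. -/
def rowEll {nout nc : ℕ} {na : Fin nc → ℕ}
    (L : (α : Fin nc) → Fin nout → Fin (na α) → ℤ) (k : Fin nout) :
    LiftCol nout nc na → ℤ :=
  fun c => match c with
  | Sum.inl k' => if k' = k then 1 else 0
  | Sum.inr ⟨α, _, i⟩ => L α k i

/-- Row `α` of the block `𝔠_out`: first block `M_{α*}`; block `β < α` has both halves
equal to `Σ_k M_{αk} L^{(β)}_{k*} mod 2`; block `α` has first half all-ones and second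
half zero; blocks `β > α` are zero. -/
def rowOut {nout nc : ℕ} {na : Fin nc → ℕ}
    (L : (α : Fin nc) → Fin nout → Fin (na α) → ℤ) (α : Fin nc) :
    LiftCol nout nc na → ℤ :=
  fun c => match c with
  | Sum.inl k => Mmat L α k
  | Sum.inr ⟨β, h, i⟩ =>
    if β < α then (∑ k, Mmat L α k * L β k i) % 2
    else if β = α then (if h = false then 1 else 0)
    else 0

/-- Row `(α, s)` of the block `𝔠_in`: zero outside block `α`, and block `α` has both
halves equal to the row `S^{(α)}_{s*}`. -/
def rowIn {nout nc : ℕ} {na ra : Fin nc → ℕ}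
    (S : (α : Fin nc) → Fin (ra α) → Fin (na α) → ℤ)
    (α : Fin nc) (s : Fin (ra α)) :
    LiftCol nout nc na → ℤ :=
  fun c => match c with
  | Sum.inl _ => 0
  | Sum.inr ⟨β, _, i⟩ =>
    if h : β = α then S α s (Fin.cast (congrArg na h) i) else 0

/-- The full lifted matrix `𝔠`, with rows `𝔠_ℓ`, `𝔠_out`, `𝔠_in`. -/
def liftMatrix {nout nc : ℕ} {na ra : Fin nc → ℕ}
    (L : (α : Fin nc) → Fin nout → Fin (na α) → ℤ)
    (S : (α : Fin nc) → Fin (ra α) → Fin (na α) → ℤ) :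
    (Fin nout ⊕ Fin nc ⊕ (Σ α : Fin nc, Fin (ra α))) → LiftCol nout nc na → ℤ :=
  Sum.elim (rowEll L) (Sum.elim (rowOut L) (fun p => rowIn S p.1 p.2))

/-! In block `α` of the lifted coefficient vector put `-τ` on the first half and `τ` on the
second, where `τ ≡ t^(α)` modulo `2^ν` is adjusted so that its entries sum to `|M_α|`; put `1` on
the first block. Rows with equal halves then see nothing of block `α`, so for two disjoint sets of
rows the block only matters if exactly one of them contains `𝔠_out,α`, in which case that row
complements the first half. As `2 (v·w) - w = v·w - (1 - v)·w`, the block contributes twice an inner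
product minus a norm, which raises the modulus of the orthogonality of `G^(α)` from `2^(ν-1)` to
`2^ν`.

Let `x_j` be the first block of the sum of the rows of a set, with the rows `𝔠_out,β`, `β < j`,
omitted. The part of the two sums lying over `L^(α)` is prescribed by `x_(α+1)` and `x'_(α+1)`, and
block `α` contributes `x_(α+1) · x'_(α+1) - x_α · x'_α` modulo `2^ν`. These contributions telescope
to `-x_0 · x'_0`, which cancels the first block, since `x_nc · x'_nc = 0` by disjointness. -/

lemma eq_of_modEq_two {a b : ℤ} (ha : a = 0 ∨ a = 1) (hb : b = 0 ∨ b = 1)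
    (h : a ≡ b [ZMOD 2]) : a = b := by
  unfold Int.ModEq at h
  omega

lemma sum_filter_eq_one {ι : Type*} [Fintype ι] {x : ι → ℤ} (hx : ∀ i, x i = 0 ∨ x i = 1)
    (f : ι → ℤ) : ∑ i with x i = 1, f i = x ⬝ᵥ f := by
  rw [sum_filter]
  refine sum_congr rfl fun i _ => ?_
  rcases hx i with h | h <;> simp [h]

section Orthogonality

variable {ι κ : Type*} {A : ι → κ → ℤ}

lemma modTwoSum_eq_zero_or_one (A : ι → κ → ℤ) (K : Finset ι) (c : κ) :
    modTwoSum A K c = 0 ∨ modTwoSum A K c = 1 :=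
  Int.emod_two_eq_zero_or_one _

lemma modTwoSum_modEq (A : ι → κ → ℤ) (K : Finset ι) (c : κ) :
    modTwoSum A K c ≡ ∑ r ∈ K, A r c [ZMOD 2] :=
  Int.mod_modEq _ _

lemma modTwoSum_singleton {r : ι} (hr : ∀ c, A r c = 0 ∨ A r c = 1) :
    modTwoSum A {r} = A r := by
  ext c
  rcases hr c with h | h <;> simp [modTwoSum, h]

lemma modTwoSum_union [DecidableEq ι] {K K' : Finset ι} (h : Disjoint K K') :
    modTwoSum A (K ∪ K') =
      modTwoSum A K + modTwoSum A K' - 2 * (modTwoSum A K * modTwoSum A K') := by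
  ext c
  have hsum : modTwoSum A (K ∪ K') c = (modTwoSum A K c + modTwoSum A K' c) % 2 := by
    simp only [modTwoSum, sum_union h, ← Int.add_emod]
  simp only [hsum, Pi.add_apply, Pi.sub_apply, Pi.mul_apply, Pi.ofNat_apply]
  rcases modTwoSum_eq_zero_or_one A K c with hK | hK <;>
    rcases modTwoSum_eq_zero_or_one A K' c with hK' | hK' <;> simp [hK, hK']

variable [Fintype κ] {ν : ℕ} {t : κ → ℤ}

lemma two_mul_dotProduct (v w : κ → ℤ) : (2 * v) ⬝ᵥ w = 2 * (v ⬝ᵥ w) := by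
  simp only [two_mul, add_dotProduct]

lemma dotProduct_modEq_of_forall_modEq {n : ℤ} {t t' : κ → ℤ} (h : ∀ i, t i ≡ t' i [ZMOD n])
    (v : κ → ℤ) : v ⬝ᵥ t ≡ v ⬝ᵥ t' [ZMOD n] :=
  Int.ModEq.sum fun i _ => (h i).mul_left _

namespace NuOrthoRows

lemma mul_dotProduct_modEq_zero (hA : NuOrthoRows ν t A) {K K' : Finset ι} (h : Disjoint K K') :
    (modTwoSum A K * modTwoSum A K') ⬝ᵥ t ≡ 0 [ZMOD 2 ^ (ν - 1)] :=
  Int.modEq_zero_iff_dvd.2 (hA K K' h)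

lemma congr_coeff {t' : κ → ℤ} (hA : NuOrthoRows ν t A) (h : ∀ i, t' i ≡ t i [ZMOD 2 ^ (ν - 1)]) :
    NuOrthoRows ν t' A := fun K K' hK =>
  Int.modEq_zero_iff_dvd.1 <|
    (dotProduct_modEq_of_forall_modEq h (modTwoSum A K * modTwoSum A K')).trans
      (hA.mul_dotProduct_modEq_zero hK)

lemma modTwoSum_union_dotProduct [DecidableEq ι] (hν : ν ≠ 0) (hA : NuOrthoRows ν t A)
    {K K' : Finset ι} (h : Disjoint K K') :
    modTwoSum A (K ∪ K') ⬝ᵥ t ≡ modTwoSum A K ⬝ᵥ t + modTwoSum A K' ⬝ᵥ t [ZMOD 2 ^ ν] := by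
  have h2 := (hA.mul_dotProduct_modEq_zero h).mul_left' (c := 2)
  rw [mul_pow_sub_one hν] at h2
  rw [modTwoSum_union h, sub_dotProduct, add_dotProduct, two_mul_dotProduct]
  simpa only [mul_zero, sub_zero] using h2.sub_left _

lemma modTwoSum_dotProduct (hν : ν ≠ 0) (hA : NuOrthoRows ν t A)
    (hbin : ∀ r c, A r c = 0 ∨ A r c = 1) (K : Finset ι) :
    modTwoSum A K ⬝ᵥ t ≡ ∑ r ∈ K, A r ⬝ᵥ t [ZMOD 2 ^ ν] := by
  classical
  induction K using Finset.induction_on with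
  | empty => simp [modTwoSum, dotProduct]
  | insert r K hr ih =>
    have h := hA.modTwoSum_union_dotProduct hν (disjoint_singleton_left.2 hr)
    rw [modTwoSum_singleton (hbin r), ← insert_eq] at h
    rw [sum_insert hr]
    exact h.trans (ih.add_left _)

/- Write `K = P ∪ Q` and `K' = P' ∪ Q` with `Q = K ∩ K'`: the cross terms between the three disjoint
sets vanish, and the square of the binary vector of `Q` is that vector. -/
lemma modTwoSum_mul_dotProduct [DecidableEq ι] (hA : NuOrthoRows ν t A) (K K' : Finset ι) :
    (modTwoSum A K * modTwoSum A K') ⬝ᵥ t ≡ modTwoSum A (K ∩ K') ⬝ᵥ t [ZMOD 2 ^ (ν - 1)] := by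
  set q := modTwoSum A (K ∩ K')
  have hPQ : Disjoint (K \ K') (K ∩ K') := disjoint_sdiff_inter K K'
  have hP'Q : Disjoint (K' \ K) (K ∩ K') := inter_comm K' K ▸ disjoint_sdiff_inter K' K
  have hK := modTwoSum_union (A := A) hPQ
  have hK' := modTwoSum_union (A := A) hP'Q
  rw [sdiff_union_inter] at hK
  rw [inter_comm, sdiff_union_inter, inter_comm] at hK'
  have expand : modTwoSum A K * modTwoSum A K' =
      modTwoSum A (K \ K') * modTwoSum A (K' \ K) - modTwoSum A (K \ K') * q
        - modTwoSum A (K' \ K) * q + q := by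
    ext c
    simp only [hK, hK', Pi.add_apply, Pi.sub_apply, Pi.mul_apply, Pi.ofNat_apply]
    rcases modTwoSum_eq_zero_or_one A (K ∩ K') c with hq | hq <;> simp only [q, hq] <;> ring
  rw [expand, add_dotProduct, sub_dotProduct, sub_dotProduct]
  simpa only [sub_zero, zero_add] using
    (((hA.mul_dotProduct_modEq_zero disjoint_sdiff_sdiff).sub
      (hA.mul_dotProduct_modEq_zero hPQ)).sub (hA.mul_dotProduct_modEq_zero hP'Q)).add_right
        (q ⬝ᵥ t)

lemma sub_compl_mul_dotProduct [DecidableEq ι] (hν : ν ≠ 0) (hA : NuOrthoRows ν t A)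
    (hbin : ∀ r c, A r c = 0 ∨ A r c = 1) (K K' : Finset ι) :
    (modTwoSum A K * modTwoSum A K' - (1 - modTwoSum A K) * modTwoSum A K') ⬝ᵥ t ≡
      2 * ∑ r ∈ K ∩ K', A r ⬝ᵥ t - ∑ r ∈ K', A r ⬝ᵥ t [ZMOD 2 ^ ν] := by
  have hinner := (hA.modTwoSum_mul_dotProduct K K').mul_left' (c := 2)
  rw [mul_pow_sub_one hν] at hinner
  have expand : modTwoSum A K * modTwoSum A K' - (1 - modTwoSum A K) * modTwoSum A K' =
      2 * (modTwoSum A K * modTwoSum A K') - modTwoSum A K' := by ring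
  rw [expand, sub_dotProduct, two_mul_dotProduct]
  exact (hinner.trans ((hA.modTwoSum_dotProduct hν hbin _).mul_left 2)).sub
    (hA.modTwoSum_dotProduct hν hbin K')

end NuOrthoRows

lemma exists_odd_modEq_sum_eq {n m : ℤ} (hn : Even n) (ht : ∀ i, Odd (t i))
    (hm : m ≡ ∑ i, t i [ZMOD n]) (hempty : IsEmpty κ → m = 0) :
    ∃ τ : κ → ℤ, (∀ i, Odd (τ i)) ∧ (∀ i, τ i ≡ t i [ZMOD n]) ∧ ∑ i, τ i = m := by
  classical
  rcases isEmpty_or_nonempty κ with hκ | ⟨⟨i₀⟩⟩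
  · exact ⟨t, ht, fun _ => .rfl, by simp [hempty hκ]⟩
  have hdvd : ∀ i, n ∣ Pi.single (M := fun _ => ℤ) i₀ (m - ∑ i, t i) i := fun i => by
    rcases eq_or_ne i i₀ with rfl | hi
    · simpa using hm.symm.dvd
    · simp [hi]
  refine ⟨t + Pi.single i₀ (m - ∑ i, t i), fun i => (ht i).add_even ?_, fun i => ?_, ?_⟩
  · exact hn.trans_dvd (hdvd i)
  · exact Int.add_modEq_left_iff.2 (hdvd i)
  · simp [sum_add_distrib]

end Orthogonality

section Lift

variable {nout nc : ℕ} {na ra : Fin nc → ℕ}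

/-- The half `h` of block `α` of a vector on the lifted columns (`false` is the first half). -/
def halfBlock (v : LiftCol nout nc na → ℤ) (α : Fin nc) (h : Bool) : Fin (na α) → ℤ :=
  fun i => v (Sum.inr ⟨α, h, i⟩)

/-- The coefficient vector on the lifted columns which is `1` on the first block, `-τ α` on the
first half of block `α` and `τ α` on its second half, so that vectors with equal halves see only the
first block. -/
def liftCoeff (τ : (α : Fin nc) → Fin (na α) → ℤ) : LiftCol nout nc na → ℤ
  | Sum.inl _ => 1
  | Sum.inr ⟨α, h, i⟩ => if h then τ α i else -τ α i

lemma halfBlock_mul (v w : LiftCol nout nc na → ℤ) (α : Fin nc) (h : Bool) :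
    halfBlock (v * w) α h = halfBlock v α h * halfBlock w α h :=
  rfl

lemma odd_liftCoeff {τ : (α : Fin nc) → Fin (na α) → ℤ} (hτ : ∀ α i, Odd (τ α i)) :
    ∀ c : LiftCol nout nc na, Odd (liftCoeff τ c)
  | Sum.inl _ => odd_one
  | Sum.inr ⟨α, true, i⟩ => hτ α i
  | Sum.inr ⟨α, false, i⟩ => (hτ α i).neg

lemma dotProduct_liftCoeff (v : LiftCol nout nc na → ℤ) (τ : (α : Fin nc) → Fin (na α) → ℤ) :
    v ⬝ᵥ liftCoeff τ = ∑ k, v (Sum.inl k) +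
      ∑ α, (halfBlock v α true - halfBlock v α false) ⬝ᵥ τ α := by
  simp only [dotProduct, Fintype.sum_sum_type, Fintype.sum_sigma, Fintype.sum_prod_type,
    Fintype.sum_bool, ← sum_add_distrib, liftCoeff, halfBlock, Pi.sub_apply]
  simp [sub_eq_add_neg, add_mul]

section Norms

variable (L : (α : Fin nc) → Fin nout → Fin (na α) → ℤ)
  (S : (α : Fin nc) → Fin (ra α) → Fin (na α) → ℤ) (τ : (α : Fin nc) → Fin (na α) → ℤ)

lemma rowEll_dotProduct_liftCoeff (k : Fin nout) : rowEll L k ⬝ᵥ liftCoeff τ = 1 := by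
  simp [dotProduct_liftCoeff, halfBlock, rowEll, Pi.sub_def]

lemma rowIn_dotProduct_liftCoeff (α : Fin nc) (s : Fin (ra α)) :
    (rowIn S α s : LiftCol nout nc na → ℤ) ⬝ᵥ liftCoeff τ = 0 := by
  simp [dotProduct_liftCoeff, halfBlock, rowIn, Pi.sub_def]

lemma rowOut_dotProduct_liftCoeff (α : Fin nc) :
    rowOut L α ⬝ᵥ liftCoeff τ = ∑ k, Mmat L α k - ∑ i, τ α i := by
  rw [dotProduct_liftCoeff, sum_eq_single α]
  · simp [halfBlock, rowOut, dotProduct, sub_eq_add_neg]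
  · intro β _ hβ
    simp [halfBlock, rowOut, hβ, dotProduct]
  · simp

lemma sum_liftCoeff : ∑ c : LiftCol nout nc na, liftCoeff τ c = nout := by
  simp [liftCoeff, Fintype.sum_sum_type, Fintype.sum_sigma, Fintype.sum_prod_type]

end Norms

section OuterSum

/-- Row indices of the lifted matrix: the rows `𝔠_ℓ`, then `𝔠_out`, then `𝔠_in`. -/
abbrev LiftRow (nout nc : ℕ) (ra : Fin nc → ℕ) :=
  Fin nout ⊕ Fin nc ⊕ (Σ α : Fin nc, Fin (ra α))

/-- The filtration on the rows of the lifted matrix: `𝔠_out,α` is at stage `α`, and all other rows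
are at the last stage `nc`. -/
def stage : LiftRow nout nc ra → ℕ
  | Sum.inl _ => nc
  | Sum.inr (Sum.inl α) => α
  | Sum.inr (Sum.inr _) => nc

variable (L : (α : Fin nc) → Fin nout → Fin (na α) → ℤ)
  (S : (α : Fin nc) → Fin (ra α) → Fin (na α) → ℤ)

/-- The first block, modulo 2, of the sum of the rows in `K` that are at stage at least `j`. -/
def outerSum (K : Finset (LiftRow nout nc ra)) (j : ℕ) : Fin nout → ℤ :=
  modTwoSum (fun r k => liftMatrix L S r (Sum.inl k)) {r ∈ K | j ≤ stage r}

variable {L S} {K K' : Finset (LiftRow nout nc ra)} {α : Fin nc}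

lemma Mmat_eq_zero_or_one (α : Fin nc) (k : Fin nout) : Mmat L α k = 0 ∨ Mmat L α k = 1 := by
  unfold Mmat
  split_ifs <;> simp

lemma outerSum_eq_zero_or_one (K : Finset (LiftRow nout nc ra)) (j : ℕ) (k : Fin nout) :
    outerSum L S K j k = 0 ∨ outerSum L S K j k = 1 :=
  modTwoSum_eq_zero_or_one _ _ _

lemma outerSum_zero (k : Fin nout) :
    outerSum L S K 0 k = modTwoSum (liftMatrix L S) K (Sum.inl k) := by
  simp [outerSum, modTwoSum]

lemma outerSum_last (k : Fin nout) :
    outerSum L S K nc k = if Sum.inl k ∈ K then 1 else 0 := by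
  have hrow : ∀ r ∈ ({r ∈ K | nc ≤ stage r} : Finset _),
      liftMatrix L S r (Sum.inl k) = if r = Sum.inl k then 1 else 0 := by
    rintro (k' | β | ⟨β, s⟩) hr
    · simp [liftMatrix, rowEll, eq_comm]
    · exact absurd (mem_filter.1 hr).2 β.is_lt.not_ge
    · simp [liftMatrix, rowIn]
  have hmem : Sum.inl k ∈ ({r ∈ K | nc ≤ stage r} : Finset _) ↔ Sum.inl k ∈ K :=
    mem_filter.trans (and_iff_left le_rfl)
  rw [outerSum, modTwoSum, sum_congr rfl hrow, sum_ite_eq']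
  simp only [hmem]
  split_ifs <;> rfl

lemma outerSum_last_dotProduct (h : Disjoint K K') :
    outerSum L S K nc ⬝ᵥ outerSum L S K' nc = 0 := by
  refine sum_eq_zero fun k _ => ?_
  by_cases hk : Sum.inl k ∈ K
  · simp [outerSum_last, disjoint_left.1 h hk]
  · simp [outerSum_last, hk]

lemma stage_eq_coe_iff {r : LiftRow nout nc ra} : stage r = α ↔ r = Sum.inr (Sum.inl α) := by
  rcases r with k | β | p
  · simp [stage, α.is_lt.ne']
  · simp [stage, Fin.val_inj]
  · simp [stage, α.is_lt.ne']

lemma outerSum_of_notMem (h : Sum.inr (Sum.inl α) ∉ K) :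
    outerSum L S K α = outerSum L S K (α + 1) := by
  unfold outerSum
  congr 1
  refine filter_congr fun r hr => ?_
  have : stage r ≠ α := fun hα => h (stage_eq_coe_iff.1 hα ▸ hr)
  omega

lemma outerSum_of_mem (h : Sum.inr (Sum.inl α) ∈ K) :
    outerSum L S K α =
      Mmat L α + outerSum L S K (α + 1) - 2 * (Mmat L α * outerSum L S K (α + 1)) := by
  have hsplit : ({r ∈ K | α ≤ stage r} : Finset _) =
      {Sum.inr (Sum.inl α)} ∪ {r ∈ K | (α : ℕ) + 1 ≤ stage r} := by
    ext r
    have hr := stage_eq_coe_iff (r := r) (α := α)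
    simp only [mem_filter, mem_union, mem_singleton, ← hr]
    have : stage r = α → r ∈ K := fun hα => hr.1 hα ▸ h
    grind
  have hdisj : Disjoint {Sum.inr (Sum.inl α)}
      ({r ∈ K | (α : ℕ) + 1 ≤ stage r} : Finset (LiftRow nout nc ra)) := by
    simp [stage]
  rw [outerSum, hsplit, modTwoSum_union hdisj, modTwoSum_singleton (r := Sum.inr (Sum.inl α))
    (Mmat_eq_zero_or_one α)]
  rfl

end OuterSum

section Blocks

variable (L : (α : Fin nc) → Fin nout → Fin (na α) → ℤ)
  (S : (α : Fin nc) → Fin (ra α) → Fin (na α) → ℤ)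

/-- The rows of `G^(α) = [L^(α); S^(α)]` whose sum makes up block `α` of the sum of the rows in `K`,
up to the contribution of `𝔠_out,α`. -/
def blockRows (K : Finset (LiftRow nout nc ra)) (α : Fin nc) : Finset (Fin nout ⊕ Fin (ra α)) :=
  ({k | outerSum L S K (α + 1) k = 1} : Finset _).disjSum
    {s | Sum.inr (Sum.inr ⟨α, s⟩) ∈ K}

lemma liftMatrix_block_modEq (r : LiftRow nout nc ra) (α : Fin nc) (h : Bool) (i : Fin (na α)) :
    liftMatrix L S r (Sum.inr ⟨α, h, i⟩) ≡
      (if α + 1 ≤ stage r then ∑ k, liftMatrix L S r (Sum.inl k) * L α k i else 0) +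
      (∑ s, if r = Sum.inr (Sum.inr ⟨α, s⟩) then S α s i else 0) +
      (if r = Sum.inr (Sum.inl α) then (if h then 0 else 1) else 0) [ZMOD 2] := by
  rcases r with k | β | ⟨β, s⟩
  · simp [liftMatrix, rowEll, stage]
  · simp only [liftMatrix, Sum.elim_inl, Sum.elim_inr, rowOut, stage, Nat.succ_le_iff]
    rcases lt_trichotomy α β with hlt | rfl | hgt
    · simp [hlt, hlt.ne', Int.mod_modEq]
    · cases h <;> simp
    · simp [hgt.ne, hgt.ne', hgt.not_gt]
  · rcases eq_or_ne β α with rfl | hβ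
    · simp [liftMatrix, rowIn]
    · simp [liftMatrix, rowIn, hβ, hβ.symm]

lemma modTwoSum_liftMatrix_block_modEq (K : Finset (LiftRow nout nc ra)) (α : Fin nc) (h : Bool)
    (i : Fin (na α)) :
    modTwoSum (liftMatrix L S) K (Sum.inr ⟨α, h, i⟩) ≡
      modTwoSum (Sum.elim (L α) (S α)) (blockRows L S K α) i +
      (if Sum.inr (Sum.inl α) ∈ K then (if h then 0 else 1) else 0) [ZMOD 2] := by
  have hL : ∑ r ∈ K, (if α + 1 ≤ stage r then ∑ k, liftMatrix L S r (Sum.inl k) * L α k i else 0) ≡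
      ∑ k with outerSum L S K (α + 1) k = 1, L α k i [ZMOD 2] := by
    rw [sum_filter_eq_one (outerSum_eq_zero_or_one _ _), ← sum_filter, sum_comm]
    simp only [← sum_mul]
    exact Int.ModEq.sum fun k _ =>
      (modTwoSum_modEq (fun r k => liftMatrix L S r (Sum.inl k)) _ k).symm.mul_right _
  have hS : ∑ r ∈ K, (∑ s, if r = Sum.inr (Sum.inr ⟨α, s⟩) then S α s i else 0) =
      ∑ s with Sum.inr (Sum.inr ⟨α, s⟩) ∈ K, S α s i := by
    rw [sum_comm, sum_filter]
    simp only [sum_ite_eq']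
  calc modTwoSum (liftMatrix L S) K (Sum.inr ⟨α, h, i⟩)
      ≡ _ [ZMOD 2] := (modTwoSum_modEq _ _ _).trans
        (Int.ModEq.sum fun r _ => liftMatrix_block_modEq L S r α h i)
    _ ≡ ∑ r ∈ blockRows L S K α, Sum.elim (L α) (S α) r i +
        (if Sum.inr (Sum.inl α) ∈ K then (if h then 0 else 1) else 0) [ZMOD 2] := by
      rw [sum_add_distrib, sum_add_distrib, hS, sum_ite_eq', blockRows, sum_disjSum]
      exact (hL.add_right _).add_right _
    _ ≡ _ [ZMOD 2] := (modTwoSum_modEq _ _ _).symm.add_right _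

variable {L S} {K K' : Finset (LiftRow nout nc ra)} {α : Fin nc}

lemma halfBlock_true :
    halfBlock (modTwoSum (liftMatrix L S) K) α true =
      modTwoSum (Sum.elim (L α) (S α)) (blockRows L S K α) := by
  ext i
  have h := modTwoSum_liftMatrix_block_modEq L S K α true i
  simp only [if_true, ite_self, add_zero] at h
  exact eq_of_modEq_two (modTwoSum_eq_zero_or_one _ _ _) (modTwoSum_eq_zero_or_one _ _ _) h

lemma halfBlock_false_of_notMem (hα : Sum.inr (Sum.inl α) ∉ K) :
    halfBlock (modTwoSum (liftMatrix L S) K) α false =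
      modTwoSum (Sum.elim (L α) (S α)) (blockRows L S K α) := by
  ext i
  have h := modTwoSum_liftMatrix_block_modEq L S K α false i
  simp only [hα, if_false, add_zero] at h
  exact eq_of_modEq_two (modTwoSum_eq_zero_or_one _ _ _) (modTwoSum_eq_zero_or_one _ _ _) h

lemma halfBlock_false_of_mem (hα : Sum.inr (Sum.inl α) ∈ K) :
    halfBlock (modTwoSum (liftMatrix L S) K) α false =
      1 - modTwoSum (Sum.elim (L α) (S α)) (blockRows L S K α) := by
  ext i
  have h := modTwoSum_liftMatrix_block_modEq L S K α false i
  have hbin := modTwoSum_eq_zero_or_one (Sum.elim (L α) (S α)) (blockRows L S K α) i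
  simp only [hα, if_true, Bool.false_eq_true, if_false] at h
  refine eq_of_modEq_two (modTwoSum_eq_zero_or_one _ _ _) ?_ (h.trans ?_)
  · rcases hbin with hg | hg <;> simp [hg]
  · rcases hbin with hg | hg <;> simp [hg, Int.ModEq]

variable {ν : ℕ} {τ : Fin (na α) → ℤ}

lemma sum_dotProduct_modEq_sum_toLeft
    (hL : ∀ k, L α k ⬝ᵥ τ ≡ Mmat L α k [ZMOD 2 ^ ν]) (hS : ∀ s, S α s ⬝ᵥ τ ≡ 0 [ZMOD 2 ^ ν])
    (P : Finset (Fin nout ⊕ Fin (ra α))) :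
    ∑ r ∈ P, Sum.elim (L α) (S α) r ⬝ᵥ τ ≡ ∑ k ∈ P.toLeft, Mmat L α k [ZMOD 2 ^ ν] := by
  rw [sum_sum_eq_sum_toLeft_add_sum_toRight]
  simpa only [add_zero, sum_const_zero, Sum.elim_inl, Sum.elim_inr] using
    (Int.ModEq.sum fun k _ => hL k).add (Int.ModEq.sum fun s _ => hS s)

lemma sum_blockRows_toLeft (f : Fin nout → ℤ) :
    ∑ k ∈ (blockRows L S K α).toLeft, f k = outerSum L S K (α + 1) ⬝ᵥ f := by
  rw [blockRows, toLeft_disjSum, sum_filter_eq_one (outerSum_eq_zero_or_one _ _)]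

lemma sum_blockRows_inter_toLeft (f : Fin nout → ℤ) :
    ∑ k ∈ (blockRows L S K α ∩ blockRows L S K' α).toLeft, f k =
      (outerSum L S K (α + 1) * outerSum L S K' (α + 1)) ⬝ᵥ f := by
  rw [toLeft_inter, blockRows, blockRows, toLeft_disjSum, toLeft_disjSum, ← filter_and, sum_filter]
  refine sum_congr rfl fun k _ => ?_
  rcases outerSum_eq_zero_or_one (L := L) (S := S) K (α + 1) k with h | h <;>
    rcases outerSum_eq_zero_or_one (L := L) (S := S) K' (α + 1) k with h' | h' <;>
      simp [h, h']

lemma halfBlock_mul_dotProduct_of_mem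
    (hν : ν ≠ 0) (hbin : ∀ r i, Sum.elim (L α) (S α) r i = 0 ∨ Sum.elim (L α) (S α) r i = 1)
    (hG : NuOrthoRows ν τ (Sum.elim (L α) (S α)))
    (hL : ∀ k, L α k ⬝ᵥ τ ≡ Mmat L α k [ZMOD 2 ^ ν]) (hS : ∀ s, S α s ⬝ᵥ τ ≡ 0 [ZMOD 2 ^ ν])
    (hK : Sum.inr (Sum.inl α) ∈ K) (hK' : Sum.inr (Sum.inl α) ∉ K') :
    (halfBlock (modTwoSum (liftMatrix L S) K * modTwoSum (liftMatrix L S) K') α true -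
        halfBlock (modTwoSum (liftMatrix L S) K * modTwoSum (liftMatrix L S) K') α false) ⬝ᵥ τ ≡
      outerSum L S K (α + 1) ⬝ᵥ outerSum L S K' (α + 1) - outerSum L S K α ⬝ᵥ outerSum L S K' α
        [ZMOD 2 ^ ν] := by
  have houter : outerSum L S K (α + 1) ⬝ᵥ outerSum L S K' (α + 1) -
      outerSum L S K α ⬝ᵥ outerSum L S K' α =
      2 * ((outerSum L S K (α + 1) * outerSum L S K' (α + 1)) ⬝ᵥ Mmat L α) -
        outerSum L S K' (α + 1) ⬝ᵥ Mmat L α := by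
    rw [outerSum_of_mem hK, outerSum_of_notMem hK']
    simp only [dotProduct, mul_sum, ← sum_sub_distrib]
    refine sum_congr rfl fun k _ => ?_
    simp only [Pi.add_apply, Pi.sub_apply, Pi.mul_apply, Pi.ofNat_apply]
    ring
  have hweight := sum_dotProduct_modEq_sum_toLeft hL hS
  rw [halfBlock_mul, halfBlock_mul, halfBlock_true, halfBlock_true, halfBlock_false_of_mem hK,
    halfBlock_false_of_notMem hK', houter, ← sum_blockRows_inter_toLeft, ← sum_blockRows_toLeft]
  exact (hG.sub_compl_mul_dotProduct hν hbin _ _).trans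
    (((hweight _).mul_left 2).sub (hweight _))

lemma halfBlock_mul_dotProduct
    (hν : ν ≠ 0) (hbin : ∀ r i, Sum.elim (L α) (S α) r i = 0 ∨ Sum.elim (L α) (S α) r i = 1)
    (hG : NuOrthoRows ν τ (Sum.elim (L α) (S α)))
    (hL : ∀ k, L α k ⬝ᵥ τ ≡ Mmat L α k [ZMOD 2 ^ ν]) (hS : ∀ s, S α s ⬝ᵥ τ ≡ 0 [ZMOD 2 ^ ν])
    (h : Disjoint K K') :
    (halfBlock (modTwoSum (liftMatrix L S) K * modTwoSum (liftMatrix L S) K') α true -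
        halfBlock (modTwoSum (liftMatrix L S) K * modTwoSum (liftMatrix L S) K') α false) ⬝ᵥ τ ≡
      outerSum L S K (α + 1) ⬝ᵥ outerSum L S K' (α + 1) - outerSum L S K α ⬝ᵥ outerSum L S K' α
        [ZMOD 2 ^ ν] := by
  by_cases hK : Sum.inr (Sum.inl α) ∈ K
  · exact halfBlock_mul_dotProduct_of_mem hν hbin hG hL hS hK (disjoint_left.1 h hK)
  by_cases hK' : Sum.inr (Sum.inl α) ∈ K'
  · rw [mul_comm (modTwoSum _ K), dotProduct_comm (outerSum L S K _),
      dotProduct_comm (outerSum L S K _)]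
    exact halfBlock_mul_dotProduct_of_mem hν hbin hG hL hS hK' hK
  · simp [halfBlock_mul, halfBlock_true, halfBlock_false_of_notMem, hK, hK', outerSum_of_notMem]

end Blocks

end Lift

theorem nuOrthoRows_liftMatrix {ν nout nc : ℕ} (hν : ν ≠ 0) {na ra : Fin nc → ℕ}
    {L : (α : Fin nc) → Fin nout → Fin (na α) → ℤ} {S : (α : Fin nc) → Fin (ra α) → Fin (na α) → ℤ}
    {τ : (α : Fin nc) → Fin (na α) → ℤ}
    (hL01 : ∀ α k i, L α k i = 0 ∨ L α k i = 1) (hS01 : ∀ α s i, S α s i = 0 ∨ S α s i = 1)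
    (hG : ∀ α, NuOrthoRows ν (τ α) (Sum.elim (L α) (S α)))
    (hL : ∀ α k, L α k ⬝ᵥ τ α ≡ Mmat L α k [ZMOD 2 ^ ν])
    (hS : ∀ α s, S α s ⬝ᵥ τ α ≡ 0 [ZMOD 2 ^ ν]) :
    NuOrthoRows (ν + 1) (liftCoeff τ) (liftMatrix L S) := by
  intro K K' hK
  set x := outerSum L S K
  set x' := outerSum L S K'
  set v := modTwoSum (liftMatrix L S) K * modTwoSum (liftMatrix L S) K'
  have htel : ∑ α : Fin nc, (x (α + 1) ⬝ᵥ x' (α + 1) - x α ⬝ᵥ x' α) = -(x 0 ⬝ᵥ x' 0) := by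
    rw [Fin.sum_univ_eq_sum_range (fun j => x (j + 1) ⬝ᵥ x' (j + 1) - x j ⬝ᵥ x' j) nc,
      sum_range_sub (fun j => x j ⬝ᵥ x' j), outerSum_last_dotProduct hK, zero_sub]
  have hfirst : ∑ k, v (Sum.inl k) = x 0 ⬝ᵥ x' 0 := by
    simp only [v, x, x', dotProduct, outerSum_zero, Pi.mul_apply]
  have hbin α : ∀ r i, Sum.elim (L α) (S α) r i = 0 ∨ Sum.elim (L α) (S α) r i = 1 :=
    Sum.rec (hL01 α) (hS01 α)
  have hblocks : ∑ α, (halfBlock v α true - halfBlock v α false) ⬝ᵥ τ α ≡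
      -(x 0 ⬝ᵥ x' 0) [ZMOD 2 ^ ν] :=
    htel ▸ Int.ModEq.sum fun α _ =>
      halfBlock_mul_dotProduct hν (hbin α) (hG α) (hL α) (hS α) hK
  have hzero : v ⬝ᵥ liftCoeff τ ≡ 0 [ZMOD 2 ^ ν] := by
    rw [dotProduct_liftCoeff, hfirst, ← add_neg_cancel (x 0 ⬝ᵥ x' 0)]
    exact hblocks.add_left _
  exact Int.modEq_zero_iff_dvd.1 hzero

lemma dotProduct_modEq_Mmat {n : ℤ} {nout nc : ℕ} {na : Fin nc → ℕ}
    {L : (α : Fin nc) → Fin nout → Fin (na α) → ℤ} {α : Fin nc} {t : Fin (na α) → ℤ}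
    (h : ∀ k, L α k ≠ 0 → L α k ⬝ᵥ t ≡ 1 [ZMOD n]) (k : Fin nout) :
    L α k ⬝ᵥ t ≡ Mmat L α k [ZMOD n] := by
  by_cases hk : L α k = 0
  · simp [hk, Mmat]
  · simpa [hk, Mmat] using h k hk

lemma exists_odd_modEq_sum_eq_sum_Mmat {n : ℤ} (hn : Even n) {nout nc : ℕ} {na : Fin nc → ℕ}
    {L : (α : Fin nc) → Fin nout → Fin (na α) → ℤ} {α : Fin nc} {t : Fin (na α) → ℤ}
    (ht : ∀ i, Odd (t i)) (hL : ∀ k, L α k ⬝ᵥ t ≡ Mmat L α k [ZMOD n])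
    (hLt : ∑ k, L α k ⬝ᵥ t ≡ ∑ i, t i [ZMOD n]) :
    ∃ τ : Fin (na α) → ℤ,
      (∀ i, Odd (τ i)) ∧ (∀ i, τ i ≡ t i [ZMOD n]) ∧ ∑ i, τ i = ∑ k, Mmat L α k := by
  refine exists_odd_modEq_sum_eq hn ht ((Int.ModEq.sum fun k _ => hL k).symm.trans hLt) fun h => ?_
  exact sum_eq_zero fun k _ => if_pos (Subsingleton.elim _ _)

theorem stmt_8_general (ν nout nc : ℕ) (hν : ν ≠ 0)
    (na ra : Fin nc → ℕ)
    (L : (α : Fin nc) → Fin nout → Fin (na α) → ℤ)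
    (S : (α : Fin nc) → Fin (ra α) → Fin (na α) → ℤ)
    (t : (α : Fin nc) → Fin (na α) → ℤ)
    (hL01 : ∀ α k i, L α k i = 0 ∨ L α k i = 1)
    (hS01 : ∀ α s i, S α s i = 0 ∨ S α s i = 1)
    (ht : ∀ α i, Odd (t α i))
    (hG : ∀ α, NuOrthoRows ν (t α) (Sum.elim (L α) (S α)))
    (hSnull : ∀ α s, (2 ^ ν : ℤ) ∣ ∑ i, S α s i * t α i)
    (hLnorm : ∀ α k, L α k ≠ 0 → (2 ^ ν : ℤ) ∣ ((∑ i, L α k i * t α i) - 1))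
    (hLt : ∀ α, (2 ^ ν : ℤ) ∣ ((∑ k, ∑ i, L α k i * t α i) - ∑ i, t α i)) :
    ∃ t' : LiftCol nout nc na → ℤ,
      (∀ c, Odd (t' c)) ∧
      NuOrthoRows (ν + 1) t' (liftMatrix L S) ∧
      (∀ k, (2 ^ (ν + 1) : ℤ) ∣ ((∑ c, rowEll L k c * t' c) - 1)) ∧
      (∀ α, (2 ^ (ν + 1) : ℤ) ∣ ∑ c, rowOut L α c * t' c) ∧
      (∀ α s, (2 ^ (ν + 1) : ℤ) ∣ ∑ c, rowIn S α s c * t' c) ∧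
      (2 ^ (ν + 1) : ℤ) ∣ ((∑ k, ∑ c, rowEll L k c * t' c) - ∑ c, t' c) := by
  have hM α : ∀ k, L α k ⬝ᵥ t α ≡ Mmat L α k [ZMOD 2 ^ ν] :=
    dotProduct_modEq_Mmat fun k hk => (Int.modEq_iff_dvd.2 (hLnorm α k hk)).symm
  have heven : Even (2 ^ ν : ℤ) := even_two.pow_of_ne_zero hν
  choose τ hodd hτ hsum using fun α =>
    exists_odd_modEq_sum_eq_sum_Mmat heven (ht α) (hM α) (Int.modEq_iff_dvd.2 (hLt α)).symm
  have hGτ α : NuOrthoRows ν (τ α) (Sum.elim (L α) (S α)) :=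
    (hG α).congr_coeff fun i => (hτ α i).of_dvd (pow_dvd_pow 2 (Nat.sub_le ν 1))
  have hLτ α k : L α k ⬝ᵥ τ α ≡ Mmat L α k [ZMOD 2 ^ ν] :=
    (dotProduct_modEq_of_forall_modEq (hτ α) _).trans (hM α k)
  have hSτ α s : S α s ⬝ᵥ τ α ≡ 0 [ZMOD 2 ^ ν] :=
    (dotProduct_modEq_of_forall_modEq (hτ α) _).trans (Int.modEq_zero_iff_dvd.2 (hSnull α s))
  have hell k : ∑ c, rowEll L k c * liftCoeff τ c = 1 := rowEll_dotProduct_liftCoeff L τ k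
  have hout α : ∑ c, rowOut L α c * liftCoeff τ c = 0 :=
    (rowOut_dotProduct_liftCoeff L τ α).trans (sub_eq_zero.2 (hsum α).symm)
  have hin α s : ∑ c, rowIn S α s c * (liftCoeff τ : LiftCol nout nc na → ℤ) c = 0 :=
    rowIn_dotProduct_liftCoeff S τ α s
  refine ⟨liftCoeff τ, odd_liftCoeff hodd, nuOrthoRows_liftMatrix hν hL01 hS01 hGτ hLτ hSτ,
    fun k => ?_, fun α => ?_, fun α s => ?_, ?_⟩
  · simp [hell k]
  · simp [hout α]
  · simp [hin α s]
  · rw [sum_congr rfl fun k _ => hell k, sum_liftCoeff]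
    simp

/-- level lifting: given, for each `α`, a `(ν,t^{(α)})`-orthogonal
matrix `G^{(α)} = [L^{(α)}; S^{(α)}]` with `S^{(α)}` `𝔽₂`-independent and
`(ν,t^{(α)})`-null, the nonzero rows of `L^{(α)}` `(ν,t^{(α)})`-orthonormal, and
`Σ_k Σᵢ L^{(α)}_{ki} t^{(α)}ᵢ ≡ Σᵢ t^{(α)}ᵢ (mod 2^ν)`, there exists an odd
coefficient vector `t` such that the rows of the lifted matrix `𝔠` form a
`(ν+1,t)`-orthogonal set, the rows `𝔠_ℓ` are `(ν+1,t)`-orthonormal, the rows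
`𝔠_out` and `𝔠_in` are `(ν+1,t)`-null, and
`Σ_k Σᵢ (𝔠_ℓ)_{ki} tᵢ ≡ Σᵢ tᵢ (mod 2^{ν+1})`. -/
theorem stmt_8 (ν nout nc : ℕ) (hν : 2 ≤ ν) (hnout : 1 ≤ nout) (hnc : 1 ≤ nc)
    (na ra : Fin nc → ℕ)
    (L : (α : Fin nc) → Fin nout → Fin (na α) → ℤ)
    (S : (α : Fin nc) → Fin (ra α) → Fin (na α) → ℤ)
    (t : (α : Fin nc) → Fin (na α) → ℤ)
    (hL01 : ∀ α k i, L α k i = 0 ∨ L α k i = 1)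
    (hS01 : ∀ α s i, S α s i = 0 ∨ S α s i = 1)
    (ht : ∀ α i, Odd (t α i))
    (hG : ∀ α, NuOrthoRows ν (t α) (Sum.elim (L α) (S α)))
    (hSind : ∀ α, RowsLinIndepF2 (S α))
    (hSnull : ∀ α s, (2 ^ ν : ℤ) ∣ ∑ i, S α s i * t α i)
    (hLorth : ∀ α, NuOrthoRows ν (t α) (fun p : {k : Fin nout // L α k ≠ 0} => L α p.1))
    (hLnorm : ∀ α k, L α k ≠ 0 → (2 ^ ν : ℤ) ∣ ((∑ i, L α k i * t α i) - 1))
    (hLt : ∀ α, (2 ^ ν : ℤ) ∣ ((∑ k, ∑ i, L α k i * t α i) - ∑ i, t α i)) :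
    ∃ t' : LiftCol nout nc na → ℤ,
      (∀ c, Odd (t' c)) ∧
      NuOrthoRows (ν + 1) t' (liftMatrix L S) ∧
      (∀ k, (2 ^ (ν + 1) : ℤ) ∣ ((∑ c, rowEll L k c * t' c) - 1)) ∧
      (∀ α, (2 ^ (ν + 1) : ℤ) ∣ ∑ c, rowOut L α c * t' c) ∧
      (∀ α s, (2 ^ (ν + 1) : ℤ) ∣ ∑ c, rowIn S α s c * t' c) ∧
      (2 ^ (ν + 1) : ℤ) ∣ ((∑ k, ∑ c, rowEll L k c * t' c) - ∑ c, t' c) := by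
  exact stmt_8_general ν nout nc (by omega) na ra L S t hL01 hS01 ht hG hSnull hLnorm hLt
end
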